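/- arXiv:1904.04644 — 7 statements merged into one kernel-verified Lean document; each statement's English description precedes it below -/
import Mathlib

section
/- Let (Ω, F, μ) be a probability space and fix real exponents 1 ≤ p < q. Let g : Ω → [0, ∞) be measurable with ∫ g^q dμ ≤ C < ∞, let c₀ > 0, and let ξ : Ω → ℝ be measurable such that |ξ(ω)| ≤ c₀ · g(ω)^p for every ω with |ξ(ω)| ≥ c₀. Then for every c ≥ c₀: ∫ |ξ − ξ^c| dμ ≤ ∫_{{|ξ| ≥ c}} |ξ| dμ ≤ c₀^{q/p} · C / c^{q/p − 1}. -/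
open MeasureTheory Filter Topology

/-- The truncation `ξ^c := (c ∧ ξ) ∨ (−c)`. -/
def trunc {Ω : Type*} (ξ : Ω → ℝ) (c : ℝ) : Ω → ℝ :=
  fun ω => max (min (ξ ω) c) (-c)

theorem statement1 {Ω : Type*} [MeasurableSpace Ω]
    (μ : Measure Ω) [IsProbabilityMeasure μ]
    (p q : ℝ) (hp : 1 ≤ p) (hpq : p < q)
    (g : Ω → ℝ) (hgmeas : Measurable g) (hg0 : ∀ ω, 0 ≤ g ω)
    (C : ℝ) (hC : ∫⁻ ω, ENNReal.ofReal (g ω ^ q) ∂μ ≤ ENNReal.ofReal C)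
    (c₀ : ℝ) (hc₀ : 0 < c₀)
    (ξ : Ω → ℝ) (hξ : Measurable ξ)
    (hbound : ∀ ω, c₀ ≤ |ξ ω| → |ξ ω| ≤ c₀ * g ω ^ p)
    (c : ℝ) (hc : c₀ ≤ c) :
    (∫⁻ ω, ENNReal.ofReal |ξ ω - trunc ξ c ω| ∂μ) ≤
      (∫⁻ ω in {ω | c ≤ |ξ ω|}, ENNReal.ofReal |ξ ω| ∂μ) ∧
    (∫⁻ ω in {ω | c ≤ |ξ ω|}, ENNReal.ofReal |ξ ω| ∂μ) ≤
      ENNReal.ofReal (c₀ ^ (q / p) * C / c ^ (q / p - 1)) := by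
  have hcpos : 0 < c := lt_of_lt_of_le hc₀ hc
  have hp0 : 0 < p := by linarith
  have hr : 1 < q / p := by rw [lt_div_iff₀ hp0]; linarith
  have hS : MeasurableSet {ω | c ≤ |ξ ω|} := measurableSet_le measurable_const hξ.abs
  constructor
  · rw [← lintegral_indicator hS]
    apply lintegral_mono
    intro ω
    by_cases h : c ≤ |ξ ω|
    · rw [Set.indicator_of_mem (by exact h)]
      apply ENNReal.ofReal_le_ofReal
      simp only [trunc]
      rcases le_total 0 (ξ ω) with h0 | h0
      · rw [abs_of_nonneg h0] at h ⊢
        rw [min_eq_right h, max_eq_left (by linarith), abs_of_nonneg (by linarith)]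
        linarith
      · rw [abs_of_nonpos h0] at h ⊢
        rw [min_eq_left (by linarith), max_eq_right (by linarith), abs_of_nonpos (by linarith)]
        linarith
    · rw [Set.indicator_of_notMem (by exact h)]
      have h2 := abs_lt.mp (not_le.mp h)
      simp only [trunc]
      rw [min_eq_left h2.2.le, max_eq_left h2.1.le]
      simp
  · have hK : 0 ≤ c₀ ^ (q / p) / c ^ (q / p - 1) := by positivity
    have key : ∀ ω, c ≤ |ξ ω| →
        |ξ ω| ≤ c₀ ^ (q / p) / c ^ (q / p - 1) * g ω ^ q := by
      intro ω h
      have hx : 0 < |ξ ω| := lt_of_lt_of_le hcpos h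
      have h1 := hbound ω (hc.trans h)
      have h2 : |ξ ω| ^ (q / p) ≤ c₀ ^ (q / p) * g ω ^ q := by
        calc |ξ ω| ^ (q / p) ≤ (c₀ * g ω ^ p) ^ (q / p) :=
              Real.rpow_le_rpow hx.le h1 (by linarith)
          _ = c₀ ^ (q / p) * g ω ^ q := by
              rw [Real.mul_rpow hc₀.le (Real.rpow_nonneg (hg0 ω) p), ← Real.rpow_mul (hg0 ω),
                mul_div_cancel₀ _ hp0.ne']
      have h3 : c ^ (q / p - 1) ≤ |ξ ω| ^ (q / p - 1) :=
        Real.rpow_le_rpow hcpos.le h (by linarith)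
      have h4 : |ξ ω| * |ξ ω| ^ (q / p - 1) = |ξ ω| ^ (q / p) := by
        rw [Real.rpow_sub_one hx.ne']; field_simp
      rw [div_mul_eq_mul_div, le_div_iff₀ (by positivity)]
      calc |ξ ω| * c ^ (q / p - 1) ≤ |ξ ω| * |ξ ω| ^ (q / p - 1) := by gcongr
        _ ≤ _ := by rw [h4]; exact h2
    calc (∫⁻ ω in {ω | c ≤ |ξ ω|}, ENNReal.ofReal |ξ ω| ∂μ)
        ≤ ∫⁻ ω in {ω | c ≤ |ξ ω|},
            ENNReal.ofReal (c₀ ^ (q / p) / c ^ (q / p - 1)) * ENNReal.ofReal (g ω ^ q) ∂μ := by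
          apply setLIntegral_mono' hS
          intro ω h
          rw [← ENNReal.ofReal_mul hK]
          exact ENNReal.ofReal_le_ofReal (key ω h)
      _ ≤ ∫⁻ ω, ENNReal.ofReal (c₀ ^ (q / p) / c ^ (q / p - 1)) * ENNReal.ofReal (g ω ^ q) ∂μ :=
          setLIntegral_le_lintegral _ _
      _ = ENNReal.ofReal (c₀ ^ (q / p) / c ^ (q / p - 1)) * ∫⁻ ω, ENNReal.ofReal (g ω ^ q) ∂μ :=
          lintegral_const_mul' _ _ ENNReal.ofReal_ne_top
      _ ≤ ENNReal.ofReal (c₀ ^ (q / p) / c ^ (q / p - 1)) * ENNReal.ofReal C := by gcongr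
      _ = _ := by
          rw [← ENNReal.ofReal_mul hK, div_mul_eq_mul_div]
end

section
/- Let Ω be a nonempty set, I a convex cone of real-valued functions on Ω (so 0 ∈ I), and fix real exponents 1 ≤ p < q. Let g : Ω → [0, ∞) with Φ(g^q; I) < ∞, let c₀ > 0, and let ξ : Ω → ℝ be such that |ξ(ω)| ≤ c₀ · g(ω)^p for every ω with |ξ(ω)| ≥ c₀. Then lim_{c → ∞} Φ(ξ^c; I) = Φ(ξ; I), where the limit is taken in [−∞, ∞]. -/
open Filter Topology

/-- The super-replication functional
`Φ(ξ; I) := inf {c ∈ ℝ : ξ ≤ c + ℓ pointwise for some ℓ ∈ I}`, as an extended real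
(with `inf ∅ = +∞`), for a family `I` of real-valued functions. -/
noncomputable def PhiR {Ω : Type*} (I : Set (Ω → ℝ)) (ξ : Ω → ℝ) : EReal :=
  sInf {x : EReal | ∃ c : ℝ, x = (c : EReal) ∧ ∃ ℓ ∈ I, ∀ ω, ξ ω ≤ c + ℓ ω}

theorem statement5 {Ω : Type*} [Nonempty Ω] (I : Set (Ω → ℝ))
    (hadd : ∀ f ∈ I, ∀ g ∈ I, f + g ∈ I)
    (hsmul : ∀ f ∈ I, ∀ a : ℝ, 0 ≤ a → a • f ∈ I)
    (hzero : (0 : Ω → ℝ) ∈ I)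
    (p q : ℝ) (hp : 1 ≤ p) (hpq : p < q)
    (g : Ω → ℝ) (hg0 : ∀ ω, 0 ≤ g ω)
    (hgq : PhiR I (fun ω => g ω ^ q) < ⊤)
    (c₀ : ℝ) (hc₀ : 0 < c₀)
    (ξ : Ω → ℝ)
    (hbound : ∀ ω, c₀ ≤ |ξ ω| → |ξ ω| ≤ c₀ * g ω ^ p) :
    Tendsto (fun c : ℝ => PhiR I (trunc ξ c)) atTop (𝓝 (PhiR I ξ)) := by
  have hp0 : 0 < p := by linarith
  obtain ⟨_, ⟨K, rfl, h, hI, hK⟩, -⟩ := sInf_lt_iff.1 hgq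
  obtain ⟨s, hs⟩ : ∃ s, s = (q - p) / p := ⟨_, rfl⟩
  have hs0 : 0 < s := by rw [hs]; exact div_pos (by linarith) hp0
  have hps : p + p * s = q := by rw [hs]; field_simp; ring
  obtain ⟨ε, hε⟩ : ∃ ε : ℝ → ℝ, ε = fun c => c₀ * (c / c₀) ^ (-s) := ⟨_, rfl⟩
  have hlim : Tendsto (fun c => ε c * K) atTop (𝓝 0) := by
    have h1 : Tendsto (fun c : ℝ => (c / c₀) ^ (-s)) atTop (𝓝 0) :=
      (tendsto_rpow_neg_atTop hs0).comp (tendsto_id.atTop_div_const hc₀)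
    have h2 := (h1.const_mul c₀).mul_const K
    rw [hε]
    simpa using h2
  have hε0 : ∀ c, c₀ ≤ c → 0 ≤ ε c := by
    intro c hc
    rw [hε]
    have : 0 < c := by linarith
    positivity
  have key : ∀ c, c₀ ≤ c → ∀ ω, |ξ ω - trunc ξ c ω| ≤ ε c * (K + h ω) := by
    intro c hc ω
    have hc0 : 0 < c := by linarith
    have hgqn : 0 ≤ g ω ^ q := Real.rpow_nonneg (hg0 ω) q
    have hKω : g ω ^ q ≤ K + h ω := hK ω
    refine le_trans ?_ (mul_le_mul_of_nonneg_left hKω (hε0 c hc))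
    by_cases hx : |ξ ω| ≤ c
    · have : trunc ξ c ω = ξ ω := by
        obtain ⟨h1, h2⟩ := abs_le.1 hx
        simp [trunc, h1, h2]
      rw [this]
      simpa using mul_nonneg (hε0 c hc) hgqn
    · push Not at hx
      have h1 : |ξ ω - trunc ξ c ω| ≤ |ξ ω| := by
        unfold trunc
        grind
      have h2 := hbound ω (by linarith)
      refine h1.trans (h2.trans ?_)
      have h3 : c / c₀ ≤ g ω ^ p := by
        rw [div_le_iff₀ hc₀]; linarith
      have hd : 0 < c / c₀ := by positivity
      have hgp : 0 < g ω ^ p := by linarith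
      have h4 : g ω ^ q = g ω ^ p * (g ω ^ p) ^ s := by
        rw [← Real.rpow_mul (hg0 ω), ← Real.rpow_add_of_nonneg (hg0 ω) hp0.le (by positivity), hps]
      have h5 : (c / c₀) ^ s ≤ (g ω ^ p) ^ s := Real.rpow_le_rpow hd.le h3 hs0.le
      have h6 : 0 < (c / c₀) ^ s := Real.rpow_pos_of_pos hd s
      rw [hε, h4]
      simp only
      rw [Real.rpow_neg hd.le]
      have h7 : 1 ≤ ((c / c₀) ^ s)⁻¹ * (g ω ^ p) ^ s := by
        rw [inv_mul_eq_div, one_le_div h6]; exact h5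
      calc c₀ * g ω ^ p = c₀ * g ω ^ p * 1 := by ring
        _ ≤ c₀ * g ω ^ p * (((c / c₀) ^ s)⁻¹ * (g ω ^ p) ^ s) := by gcongr
        _ = _ := by ring
  have comb : ∀ c, c₀ ≤ c → ∀ l ∈ I, l + ε c • h ∈ I := fun c hc l hl =>
    hadd _ hl _ (hsmul _ hI _ (hε0 c hc))
  rw [tendsto_order]
  constructor
  · intro a ha
    obtain ⟨r, har, hr⟩ := EReal.lt_iff_exists_real_btwn.1 ha
    obtain ⟨r2, hrr, hr2⟩ := EReal.lt_iff_exists_real_btwn.1 hr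
    have hrr' : 0 < r2 - r := sub_pos.2 (EReal.coe_lt_coe_iff.1 hrr)
    filter_upwards [hlim.eventually_lt_const hrr', eventually_ge_atTop c₀] with c h1 hc
    refine lt_of_lt_of_le har (le_sInf ?_)
    rintro _ ⟨x, rfl, l, hl, hx⟩
    have h2 : PhiR I ξ ≤ ((x + ε c * K : ℝ) : EReal) := by
      refine sInf_le ⟨_, rfl, _, comb c hc l hl, fun ω => ?_⟩
      have h3 := (abs_le.1 (key c hc ω)).2
      have h4 := hx ω
      simp only [Pi.add_apply, Pi.smul_apply, smul_eq_mul]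
      linarith
    have h3 := EReal.coe_lt_coe_iff.1 (hr2.trans_le h2)
    exact EReal.coe_le_coe_iff.2 (by linarith)
  · intro b hb
    obtain ⟨_, ⟨x, rfl, l, hl, hx⟩, hxb⟩ := sInf_lt_iff.1 hb
    obtain ⟨r, hxr, hrb⟩ := EReal.lt_iff_exists_real_btwn.1 hxb
    have hxr' : 0 < r - x := sub_pos.2 (EReal.coe_lt_coe_iff.1 hxr)
    filter_upwards [hlim.eventually_lt_const hxr', eventually_ge_atTop c₀] with c h1 hc
    have h2 : PhiR I (trunc ξ c) ≤ ((x + ε c * K : ℝ) : EReal) := by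
      refine sInf_le ⟨_, rfl, _, comb c hc l hl, fun ω => ?_⟩
      have h3 := (abs_le.1 (key c hc ω)).1
      have h4 := hx ω
      simp only [Pi.add_apply, Pi.smul_apply, smul_eq_mul]
      linarith
    refine lt_of_le_of_lt (h2.trans (EReal.coe_le_coe_iff.2 ?_)) hrb
    linarith
end

section
/- Let T > 0, q ≥ 1 a real number, and let ω : [0, T] → ℝ^d be right-continuous with left limits (càdlàg), i.e. for every t ∈ [0, T) the function ω is continuous from the right at t, and for every t ∈ (0, T] the limit of ω(s) as s ↑ t exists. Define τ₀ := 0 and recursively τ_n := inf({t ∈ (τ_{n−1}, T] : |ω(t)|^q > |ω(τ_{n−1})|^q + 1} ∪ {T}) for n ≥ 1, where |·| is the Euclidean norm on ℝ^d. Then: (a) there exists N ∈ ℕ with τ_N = T; and (b) sup_{t ∈ [0, T]} |ω(t)|^q ≤ sup_{n ∈ ℕ} |ω(τ_n)|^q + 1. -/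
open Filter Topology

/-- The recursively defined hitting times `τ₀ = 0`,
`τ_{n+1} = inf ({t ∈ (τ_n, T] : |ω(t)|^q > |ω(τ_n)|^q + 1} ∪ {T})`. -/
noncomputable def hitTimes (T q : ℝ) {d : ℕ} (ω : ℝ → EuclideanSpace ℝ (Fin d)) : ℕ → ℝ
  | 0 => 0
  | n + 1 => sInf ({t : ℝ | t ∈ Set.Ioc (hitTimes T q ω n) T ∧
      ‖ω (hitTimes T q ω n)‖ ^ q + 1 < ‖ω t‖ ^ q} ∪ {T})

theorem statement7 (T : ℝ) (hT : 0 < T) (q : ℝ) (hq : 1 ≤ q) (d : ℕ)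
    (ω : ℝ → EuclideanSpace ℝ (Fin d))
    (hright : ∀ t ∈ Set.Ico (0 : ℝ) T, ContinuousWithinAt ω (Set.Ici t) t)
    (hleft : ∀ t ∈ Set.Ioc (0 : ℝ) T, ∃ L, Tendsto ω (nhdsWithin t (Set.Iio t)) (𝓝 L)) :
    (∃ N : ℕ, hitTimes T q ω N = T) ∧
      ∀ t ∈ Set.Icc (0 : ℝ) T,
        ‖ω t‖ ^ q ≤ (⨆ n : ℕ, ‖ω (hitTimes T q ω n)‖ ^ q) + 1 := by
  set τ := hitTimes T q ω with hτ
  set f : ℝ → ℝ := fun t => ‖ω t‖ ^ q with hf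
  have hq0 : 0 ≤ q := by linarith
  have hS : ∀ n, τ (n+1) = sInf ({t : ℝ | t ∈ Set.Ioc (τ n) T ∧ f (τ n) + 1 < f t} ∪ {T}) :=
    fun n => rfl
  have h0 : τ 0 = 0 := rfl
  have hfr : ∀ t ∈ Set.Ico (0 : ℝ) T, ContinuousWithinAt f (Set.Ici t) t := fun t ht =>
    (hright t ht).norm.rpow_const (Or.inr hq0)
  have hfl : ∀ t ∈ Set.Ioc (0 : ℝ) T, ∃ L, Tendsto f (nhdsWithin t (Set.Iio t)) (𝓝 L) := by
    intro t ht
    obtain ⟨L, hL⟩ := hleft t ht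
    exact ⟨_, hL.norm.rpow_const (Or.inr hq0)⟩
  have hleT : ∀ n, τ n ≤ T := by
    intro n
    induction n with
    | zero => rw [h0]; exact hT.le
    | succ n ih =>
      rw [hS]
      refine csInf_le ⟨τ n, ?_⟩ (Or.inr rfl)
      rintro x (hx | hx)
      · exact hx.1.1.le
      · rw [hx]; exact ih
  have hbdd : ∀ n, τ n ∈ lowerBounds
      ({t : ℝ | t ∈ Set.Ioc (τ n) T ∧ f (τ n) + 1 < f t} ∪ {T}) := by
    rintro n x (hx | hx)
    · exact hx.1.1.le
    · rw [hx]; exact hleT n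
  have hstep : ∀ n, τ n ≤ τ (n+1) := by
    intro n
    rw [hS]
    exact le_csInf ⟨T, Or.inr rfl⟩ (hbdd n)
  have hmono : Monotone τ := monotone_nat_of_le_succ hstep
  have hnn : ∀ n, 0 ≤ τ n := fun n => h0 ▸ hmono (Nat.zero_le n)
  have hjump : ∀ n, τ (n+1) < T → f (τ n) + 1 ≤ f (τ (n+1)) := by
    intro n hn
    by_contra hcon
    push Not at hcon
    have hc := hfr (τ (n+1)) ⟨hnn _, hn⟩
    have hev := hc.eventually (gt_mem_nhds hcon)
    rw [eventually_nhdsWithin_iff, Metric.eventually_nhds_iff] at hev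
    obtain ⟨ε, hε, hev⟩ := hev
    have hlt : sInf ({t : ℝ | t ∈ Set.Ioc (τ n) T ∧ f (τ n) + 1 < f t} ∪ {T})
        < min (τ (n+1) + ε) T := by
      rw [← hS]
      exact lt_min (by linarith) hn
    obtain ⟨x, hx, hxlt⟩ := exists_lt_of_csInf_lt ⟨T, Or.inr rfl⟩ hlt
    have hge : τ (n+1) ≤ x := by
      rw [hS]
      exact csInf_le ⟨_, hbdd n⟩ hx
    obtain ⟨hx1, hx2⟩ := lt_min_iff.1 hxlt
    rcases hx with hx | hx
    · have := hev (y := x) (by rw [Real.dist_eq, abs_lt]; constructor <;> linarith) hge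
      linarith [hx.2]
    · exact absurd hx hx2.ne
  have ha : ∃ N : ℕ, τ N = T := by
    by_contra hcon
    push Not at hcon
    have hlt : ∀ n, τ n < T := fun n => lt_of_le_of_ne (hleT n) (hcon n)
    have hsm : StrictMono τ := by
      refine strictMono_nat_of_lt_succ fun n => lt_of_le_of_ne (hstep n) fun h => ?_
      have := hjump n (hlt _)
      rw [← h] at this
      linarith
    have hgrow : ∀ n : ℕ, f (τ 0) + n ≤ f (τ n) := by
      intro n
      induction n with
      | zero => simp
      | succ n ih =>
        have := hjump n (hlt _)
        push_cast
        linarith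
    have hb : BddAbove (Set.range τ) := ⟨T, by rintro _ ⟨n, rfl⟩; exact hleT n⟩
    have hlim := tendsto_atTop_ciSup hmono hb
    have hltL : ∀ n, τ n < ⨆ i, τ i := fun n =>
      (hsm (Nat.lt_succ_self n)).trans_le (le_ciSup hb (n+1))
    obtain ⟨L, hL⟩ := hfl (⨆ i, τ i) ⟨h0 ▸ hltL 0, ciSup_le hleT⟩
    have h1 : Tendsto τ atTop (𝓝[<] (⨆ i, τ i)) :=
      tendsto_nhdsWithin_iff.2 ⟨hlim, Eventually.of_forall hltL⟩
    have h2 := hL.comp h1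
    have h3 : Tendsto (f ∘ τ) atTop atTop :=
      tendsto_atTop_mono hgrow (tendsto_atTop_add_const_left _ _ tendsto_natCast_atTop_atTop)
    exact not_tendsto_nhds_of_tendsto_atTop h3 _ h2
  refine ⟨ha, ?_⟩
  obtain ⟨N, hN⟩ := ha
  have hB : BddAbove (Set.range fun n => f (τ n)) := by
    refine (((Set.finite_Iic N).image fun n => f (τ n)).subset ?_).bddAbove
    rintro _ ⟨n, rfl⟩
    rcases le_total n N with h | h
    · exact ⟨n, h, rfl⟩
    · refine ⟨N, le_refl N, ?_⟩
      have : τ n = τ N := le_antisymm (hN ▸ hleT n) (hmono h)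
      simp only [this]
  have key : ∀ t ∈ Set.Icc (0 : ℝ) T, ∃ n, f t ≤ f (τ n) + 1 := by
    intro t ht
    rcases eq_or_lt_of_le ht.2 with h | h
    · exact ⟨N, by rw [hN, h]; linarith⟩
    · have hex : ∃ n, t < τ n := ⟨N, hN ▸ h⟩
      classical
      obtain ⟨m, hm, hmin⟩ : ∃ m, t < τ m ∧ ∀ k < m, ¬ t < τ k :=
        ⟨Nat.find hex, Nat.find_spec hex, fun k hk => Nat.find_min hex hk⟩
      cases m with
      | zero => rw [h0] at hm; exact absurd ht.1 (not_le.2 hm)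
      | succ n =>
        refine ⟨n, ?_⟩
        have hle := not_lt.1 (hmin n (Nat.lt_succ_self n))
        rcases eq_or_lt_of_le hle with h' | h'
        · rw [h']; linarith
        · by_contra hc
          push Not at hc
          rw [hS] at hm
          exact absurd (csInf_le ⟨_, hbdd n⟩ (Or.inl ⟨⟨h', ht.2⟩, hc⟩)) (not_le.2 hm)
  intro t ht
  obtain ⟨n, hn⟩ := key t ht
  have := le_ciSup hB n
  exact hn.trans (add_le_add_left this 1)
end

section
/- Let Ω be a nonempty set and I a convex cone of real-valued functions on Ω (so 0 ∈ I) with Φ(0; I) = 0. Let K₀ := ∅ ⊆ K₁ ⊆ K₂ ⊆ ⋯ be an increasing sequence of subsets of Ω such that Φ(1_{Ω∖K_k}; I) ≤ 2^{−2k} for every k ≥ 1, and define η* : Ω → ℝ by η* := Σ_{k=1}^∞ 2^{−k} · 1_{K_k ∖ K_{k−1}}. Then for all bounded ξ, ζ : Ω → ℝ: |Φ(ξ; I) − Φ(ζ; I)| ≤ 4 · sup_{ω ∈ Ω} |(ξ(ω) − ζ(ω)) · η*(ω)|; in particular |Φ(ξ; I)| ≤ 4 · sup_{ω ∈ Ω}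 |ξ(ω) η*(ω)| for every bounded ξ. -/
open Filter Topology

/-- `η* := Σ_{k=1}^∞ 2^{−k} · 1_{K_k ∖ K_{k−1}}`. -/
noncomputable def etaStar {Ω : Type*} (K : ℕ → Set Ω) : Ω → ℝ :=
  fun ω => ∑' k : ℕ, (K (k + 1) \ K k).indicator (fun _ => ((2 : ℝ) ^ (k + 1))⁻¹) ω

/-- superhedging predicate -/
def HedgeAux {Ω : Type*} (I : Set (Ω → ℝ)) (ξ : Ω → ℝ) (c : ℝ) : Prop :=
  ∃ ℓ ∈ I, ∀ ω, ξ ω ≤ c + ℓ ω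

lemma HedgeAux.le {Ω : Type*} {I : Set (Ω → ℝ)} {ξ : Ω → ℝ} {c : ℝ} (h : HedgeAux I ξ c) :
    PhiR I ξ ≤ (c : EReal) := sInf_le ⟨c, rfl, h⟩

lemma HedgeAux.of_lt {Ω : Type*} {I : Set (Ω → ℝ)} {ξ : Ω → ℝ} {c : ℝ}
    (h : PhiR I ξ < (c : EReal)) : HedgeAux I ξ c := by
  obtain ⟨x, ⟨c', rfl, ℓ, hℓ, h1⟩, h2⟩ := sInf_lt_iff.1 h
  have h2 : c' < c := by exact_mod_cast h2
  exact ⟨ℓ, hℓ, fun ω => by linarith [h1 ω]⟩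

lemma HedgeAux.add {Ω : Type*} {I : Set (Ω → ℝ)}
    (hadd : ∀ f ∈ I, ∀ g ∈ I, f + g ∈ I) {ξ ζ : Ω → ℝ} {c d : ℝ}
    (h : HedgeAux I ξ c) (h' : HedgeAux I ζ d) : HedgeAux I (fun ω => ξ ω + ζ ω) (c + d) := by
  obtain ⟨f, hf, h1⟩ := h
  obtain ⟨g, hg, h2⟩ := h'
  exact ⟨f + g, hadd f hf g hg, fun ω => by simp only [Pi.add_apply]; linarith [h1 ω, h2 ω]⟩

lemma HedgeAux.smul {Ω : Type*} {I : Set (Ω → ℝ)}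
    (hsmul : ∀ f ∈ I, ∀ a : ℝ, 0 ≤ a → a • f ∈ I) {ξ : Ω → ℝ} {c a : ℝ} (ha : 0 ≤ a)
    (h : HedgeAux I ξ c) : HedgeAux I (fun ω => a * ξ ω) (a * c) := by
  obtain ⟨f, hf, h1⟩ := h
  refine ⟨a • f, hsmul f hf a ha, fun ω => ?_⟩
  simp only [Pi.smul_apply, smul_eq_mul]
  nlinarith [mul_le_mul_of_nonneg_left (h1 ω) ha]

lemma HedgeAux.mono {Ω : Type*} {I : Set (Ω → ℝ)} {ξ ζ : Ω → ℝ} {c : ℝ}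
    (h : HedgeAux I ζ c) (hle : ∀ ω, ξ ω ≤ ζ ω) : HedgeAux I ξ c := by
  obtain ⟨f, hf, h1⟩ := h
  exact ⟨f, hf, fun ω => (hle ω).trans (h1 ω)⟩

lemma etaStar_eq_aux {Ω : Type*} (K : ℕ → Set Ω) (hKmono : Monotone K) (ω : Ω) (i : ℕ)
    (h : ω ∈ K (i + 1) \ K i) : etaStar K ω = ((2 : ℝ) ^ (i + 1))⁻¹ := by
  unfold etaStar
  rw [tsum_eq_single i]
  · simp [h.1, h.2]
  · intro k hk
    apply Set.indicator_of_notMem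
    rintro ⟨h1, h2⟩
    rcases lt_or_gt_of_ne hk with hlt | hlt
    · exact h.2 (hKmono (by omega : k + 1 ≤ i) h1)
    · exact h2 (hKmono (by omega : i + 1 ≤ k) h.1)

lemma exists_layer_aux {Ω : Type*} (K : ℕ → Set Ω) (hK0 : K 0 = ∅) (ω : Ω) (n : ℕ)
    (h : ω ∈ K n) : ∃ i, i < n ∧ ω ∈ K (i + 1) \ K i := by
  induction n with
  | zero => simp [hK0] at h
  | succ n ih =>
    by_cases hn : ω ∈ K n
    · obtain ⟨i, hi, h'⟩ := ih hn
      exact ⟨i, by omega, h'⟩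
    · exact ⟨n, by omega, h, hn⟩

lemma etaStar_bd_aux {Ω : Type*} (K : ℕ → Set Ω) (hK0 : K 0 = ∅) (hKmono : Monotone K)
    (ω : Ω) : |etaStar K ω| ≤ 1 := by
  by_cases h : ∃ n, ω ∈ K n
  · obtain ⟨n, hn⟩ := h
    obtain ⟨i, -, hi⟩ := exists_layer_aux K hK0 ω n hn
    rw [etaStar_eq_aux K hKmono ω i hi, abs_of_nonneg (by positivity)]
    exact inv_le_one_of_one_le₀ (one_le_pow₀ (by norm_num))
  · push Not at h
    have : etaStar K ω = 0 := by
      unfold etaStar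
      simp [h]
    simp [this]

/-- the dominating step function -/
noncomputable def gAux {Ω : Type*} (K : ℕ → Set Ω) : ℕ → Ω → ℝ
  | 0 => fun _ => 2
  | n + 1 => fun ω => gAux K n ω + 2 ^ (n + 1) * (K (n + 1))ᶜ.indicator (fun _ => (1 : ℝ)) ω

lemma ind_nonneg_aux {Ω : Type*} (A : Set Ω) (ω : Ω) :
    0 ≤ A.indicator (fun _ => (1 : ℝ)) ω := Set.indicator_nonneg (fun _ _ => zero_le_one) ω

lemma gAux_mono {Ω : Type*} (K : ℕ → Set Ω) (ω : Ω) : Monotone fun n => gAux K n ω := by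
  refine monotone_nat_of_le_succ fun n => ?_
  have := ind_nonneg_aux (K (n + 1))ᶜ ω
  simp only [gAux]
  have : 0 ≤ (2 : ℝ) ^ (n + 1) * (K (n + 1))ᶜ.indicator (fun _ => (1 : ℝ)) ω := by positivity
  linarith

lemma gAux_ge {Ω : Type*} (K : ℕ → Set Ω) (hKmono : Monotone K) (ω : Ω) (i : ℕ)
    (h : ω ∉ K i) : (2 : ℝ) ^ (i + 1) ≤ gAux K i ω := by
  induction i with
  | zero => simp [gAux]
  | succ i ih =>
    have := ih fun h' => h (hKmono (Nat.le_succ i) h')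
    have h1 : (K (i + 1))ᶜ.indicator (fun _ => (1 : ℝ)) ω = 1 := by simp [h]
    simp only [gAux, h1]
    rw [pow_succ]
    linarith

lemma phi_core_aux {Ω : Type*} (I : Set (Ω → ℝ))
    (hadd : ∀ f ∈ I, ∀ g ∈ I, f + g ∈ I)
    (hsmul : ∀ f ∈ I, ∀ a : ℝ, 0 ≤ a → a • f ∈ I)
    (hzero : (0 : Ω → ℝ) ∈ I)
    (K : ℕ → Set Ω) (hK0 : K 0 = ∅) (hKmono : Monotone K)
    (hKPhi : ∀ k : ℕ, 1 ≤ k →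
      PhiR I ((K k)ᶜ.indicator fun _ => (1 : ℝ)) ≤ ((((2 : ℝ) ^ (2 * k))⁻¹ : ℝ) : EReal))
    (ξ ζ : Ω → ℝ) (hξ : ∃ M : ℝ, ∀ ω, |ξ ω| ≤ M) (hζ : ∃ M : ℝ, ∀ ω, |ζ ω| ≤ M) :
    PhiR I ξ ≤ PhiR I ζ + (((4 * ⨆ ω, |(ξ ω - ζ ω) * etaStar K ω|) : ℝ) : EReal) := by
  obtain ⟨M₁, hM₁⟩ := hξ
  obtain ⟨M₂, hM₂⟩ := hζ
  set S := ⨆ ω, |(ξ ω - ζ ω) * etaStar K ω| with hS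
  set M := |M₁| + |M₂| with hM
  have hM0 : 0 ≤ M := by positivity
  have hδ : ∀ ω, |ξ ω - ζ ω| ≤ M := fun ω =>
    (abs_sub _ _).trans (add_le_add ((hM₁ ω).trans (le_abs_self _)) ((hM₂ ω).trans (le_abs_self _)))
  have hbdd : BddAbove (Set.range fun ω => |(ξ ω - ζ ω) * etaStar K ω|) := by
    refine ⟨M, ?_⟩
    rintro _ ⟨ω, rfl⟩
    simp only [abs_mul]
    calc _ ≤ M * 1 := mul_le_mul (hδ ω) (etaStar_bd_aux K hK0 hKmono ω) (abs_nonneg _) hM0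
      _ = M := mul_one M
  have hS0 : 0 ≤ S := Real.iSup_nonneg fun ω => abs_nonneg _
  have hSle : ∀ ω, |(ξ ω - ζ ω) * etaStar K ω| ≤ S := fun ω => le_ciSup hbdd ω
  have hInd : ∀ k : ℕ, HedgeAux I ((K (k + 1))ᶜ.indicator fun _ => (1 : ℝ))
      (2 * ((2 : ℝ) ^ (2 * (k + 1)))⁻¹) := by
    intro k
    apply HedgeAux.of_lt
    refine (hKPhi (k + 1) (by omega)).trans_lt ?_
    have : 0 < ((2 : ℝ) ^ (2 * (k + 1)))⁻¹ := by positivity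
    exact_mod_cast (by linarith : ((2 : ℝ) ^ (2 * (k + 1)))⁻¹ < 2 * ((2 : ℝ) ^ (2 * (k + 1)))⁻¹)
  have hg : ∀ n, HedgeAux I (gAux K n) (4 - 2 * ((2 : ℝ) ^ n)⁻¹) := by
    intro n
    induction n with
    | zero => exact ⟨0, hzero, fun ω => by norm_num [gAux]⟩
    | succ n ih =>
      have h := ih.add hadd ((hInd n).smul hsmul (a := 2 ^ (n + 1)) (by positivity))
      have e : (4 - 2 * ((2 : ℝ) ^ n)⁻¹) + 2 ^ (n + 1) * (2 * ((2 : ℝ) ^ (2 * (n + 1)))⁻¹)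
          = 4 - 2 * ((2 : ℝ) ^ (n + 1))⁻¹ := by
        have : (2 : ℝ) ^ (2 * (n + 1)) = 2 ^ (n + 1) * 2 ^ (n + 1) := by rw [← pow_add]; congr 1; ring
        rw [this, pow_succ]
        field_simp
        ring
      rw [e] at h
      exact h
  have hpt : ∀ n ω, ξ ω - ζ ω ≤ S * gAux K (n + 1) ω
      + M * (K (n + 1))ᶜ.indicator (fun _ => (1 : ℝ)) ω := by
    intro n ω
    have hg0 : 2 ≤ gAux K (n + 1) ω := gAux_mono K ω (Nat.zero_le (n + 1))
    by_cases h : ω ∈ K (n + 1)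
    · obtain ⟨i, hin, hi⟩ := exists_layer_aux K hK0 ω _ h
      have h1 := hSle ω
      rw [etaStar_eq_aux K hKmono ω i hi, abs_mul, abs_of_pos (a := ((2 : ℝ) ^ (i + 1))⁻¹) (by positivity),
        ← div_eq_mul_inv, div_le_iff₀ (by positivity)] at h1
      have h2 := (gAux_ge K hKmono ω i hi.2).trans (gAux_mono K ω hin.le)
      have h3 := mul_le_mul_of_nonneg_left h2 hS0
      have h4 := mul_nonneg hM0 (ind_nonneg_aux (K (n + 1))ᶜ ω)
      have h5 := le_abs_self (ξ ω - ζ ω)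
      simp only at h3
      linarith
    · have h1 : (K (n + 1))ᶜ.indicator (fun _ => (1 : ℝ)) ω = 1 := by simp [h]
      rw [h1]
      have := (le_abs_self _).trans (hδ ω)
      have : 0 ≤ S * gAux K (n + 1) ω := mul_nonneg hS0 (by linarith)
      linarith
  rw [← EReal.sub_le_iff_le_add (Or.inl (EReal.coe_ne_bot _)) (Or.inl (EReal.coe_ne_top _))]
  refine le_sInf ?_
  rintro _ ⟨c, rfl, hc⟩
  rw [EReal.sub_le_iff_le_add (Or.inl (EReal.coe_ne_bot _)) (Or.inl (EReal.coe_ne_top _)),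
    ← EReal.coe_add]
  have hc : HedgeAux I ζ c := hc
  have key : ∀ n : ℕ, PhiR I ξ ≤
      ((c + (S * 4 + M * (2 * ((2 : ℝ) ^ (2 * (n + 1)))⁻¹)) : ℝ) : EReal) := by
    intro n
    have h := hc.add hadd (((hg (n + 1)).smul hsmul hS0).add hadd ((hInd n).smul hsmul hM0))
    refine (h.mono (ξ := ξ) fun ω => by linarith [hpt n ω]).le.trans ?_
    have : 0 < ((2 : ℝ) ^ (n + 1))⁻¹ := by positivity
    exact EReal.coe_le_coe_iff.2 (by nlinarith)
  refine ge_of_tendsto' (x := Filter.atTop) ?_ key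
  refine (continuous_coe_real_ereal.tendsto _).comp ?_
  have h0 : Filter.Tendsto (fun n : ℕ => ((2 : ℝ) ^ (2 * (n + 1)))⁻¹) Filter.atTop (nhds 0) := by
    refine Filter.Tendsto.inv_tendsto_atTop ?_
    refine (tendsto_pow_atTop_atTop_of_one_lt (by norm_num : (1 : ℝ) < 2)).comp ?_
    exact Filter.tendsto_atTop_mono (fun n => by simp only [id]; omega) Filter.tendsto_id
  have := (((h0.const_mul 2).const_mul M).const_add (S * 4)).const_add c
  convert this using 2
  ring

theorem statement10 {Ω : Type*} [Nonempty Ω] (I : Set (Ω → ℝ))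
    (hadd : ∀ f ∈ I, ∀ g ∈ I, f + g ∈ I)
    (hsmul : ∀ f ∈ I, ∀ a : ℝ, 0 ≤ a → a • f ∈ I)
    (hzero : (0 : Ω → ℝ) ∈ I)
    (hPhi0 : PhiR I 0 = 0)
    (K : ℕ → Set Ω) (hK0 : K 0 = ∅) (hKmono : Monotone K)
    (hKPhi : ∀ k : ℕ, 1 ≤ k →
      PhiR I ((K k)ᶜ.indicator fun _ => (1 : ℝ)) ≤ ((((2 : ℝ) ^ (2 * k))⁻¹ : ℝ) : EReal)) :
    ∀ ξ ζ : Ω → ℝ, (∃ M : ℝ, ∀ ω, |ξ ω| ≤ M) → (∃ M : ℝ, ∀ ω, |ζ ω| ≤ M) →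
      (PhiR I ξ ≤ PhiR I ζ
          + (((4 * ⨆ ω, |(ξ ω - ζ ω) * etaStar K ω|) : ℝ) : EReal) ∧
        PhiR I ζ ≤ PhiR I ξ
          + (((4 * ⨆ ω, |(ξ ω - ζ ω) * etaStar K ω|) : ℝ) : EReal)) ∧
      (PhiR I ξ ≤ (((4 * ⨆ ω, |ξ ω * etaStar K ω|) : ℝ) : EReal) ∧
        ((-(4 * ⨆ ω, |ξ ω * etaStar K ω|) : ℝ) : EReal) ≤ PhiR I ξ) := by
  intro ξ ζ hξ hζ
  have core := phi_core_aux I hadd hsmul hzero K hK0 hKmono hKPhi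
  have hz : ∃ M : ℝ, ∀ ω, |(0 : Ω → ℝ) ω| ≤ M := ⟨0, by simp⟩
  refine ⟨⟨core ξ ζ hξ hζ, ?_⟩, ?_, ?_⟩
  · have h := core ζ ξ hζ hξ
    have e : ∀ ω, |(ζ ω - ξ ω) * etaStar K ω| = |(ξ ω - ζ ω) * etaStar K ω| := fun ω => by
      rw [abs_mul, abs_mul, abs_sub_comm]
    simpa only [e] using h
  · have h := core ξ 0 hξ hz
    simpa only [hPhi0, zero_add, Pi.zero_apply, sub_zero] using h
  · have h := core 0 ξ hz hξ
    have e : ∀ ω, |((0 : Ω → ℝ) ω - ξ ω) * etaStar K ω| = |ξ ω * etaStar K ω| := fun ω => by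
      simp [abs_mul]
    simp only [e, hPhi0] at h
    rw [← EReal.sub_le_iff_le_add (Or.inl (EReal.coe_ne_bot _)) (Or.inl (EReal.coe_ne_top _)),
      zero_sub] at h
    rw [EReal.coe_neg]
    exact h
end

section
/- Let Ω be a perfectly normal Hausdorff topological space equipped with its Borel σ-algebra, and let 𝒬 be a nonempty convex set of Borel probability measures on Ω that is compact in the topology of weak convergence (the coarsest topology making Q ↦ ∫ ξ dQ continuous for every bounded continuous ξ : Ω → ℝ). Then for every bounded upper semicontinuous η : Ω → ℝ: sup_{Q ∈ 𝒬} ∫ η dQ = inf{ sup_{Q ∈ 𝒬} ∫ ξ dQ : ξ bounded continuous on Ω with η ≤ ξ pointwise }. -/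
open MeasureTheory Filter Topology

lemma closed_approx {Ω : Type*} [TopologicalSpace Ω] [PerfectlyNormalSpace Ω]
    [MeasurableSpace Ω] [BorelSpace Ω] (Q : Measure Ω) [IsProbabilityMeasure Q]
    (F : Set Ω) (hF : IsClosed F) (ε : ℝ) (hε : 0 < ε) :
    ∃ f : BoundedContinuousFunction Ω ℝ, (∀ ω, F.indicator (fun _ => (1 : ℝ)) ω ≤ f ω) ∧
      ∫ ω, f ω ∂Q ≤ ∫ ω, F.indicator (fun _ => (1 : ℝ)) ω ∂Q + ε := by
  obtain ⟨g, hg, hg01⟩ := perfectlyNormalSpace_iff_forall_isClosed_preimage_zero.1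
    (inferInstance : PerfectlyNormalSpace Ω) F hF
  have hmem : ∀ ω, ω ∈ F ↔ g ω = 0 := fun ω => by rw [hg]; rfl
  have hb : ∀ (n : ℕ) ω, ‖max 0 (1 - n * g ω)‖ ≤ 1 := fun n ω => by
    have h1 : 0 ≤ (n : ℝ) * g ω := mul_nonneg n.cast_nonneg (hg01 ω).1
    rw [Real.norm_eq_abs, abs_of_nonneg (le_max_left _ _)]
    exact max_le zero_le_one (by linarith)
  have hc : ∀ n : ℕ, Continuous fun ω => max 0 (1 - n * g ω) := fun n => by fun_prop
  have hlim : Tendsto (fun n : ℕ => ∫ ω, max 0 (1 - n * g ω) ∂Q) atTop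
      (𝓝 (∫ ω, F.indicator (fun _ => (1 : ℝ)) ω ∂Q)) := by
    refine tendsto_integral_of_dominated_convergence (fun _ => 1)
      (fun n => (hc n).measurable.aestronglyMeasurable) (integrable_const 1)
      (fun n => ae_of_all _ (hb n)) (ae_of_all _ fun ω => ?_)
    by_cases h : ω ∈ F
    · simp [h, (hmem ω).1 h]
    · have hpos : 0 < g ω := lt_of_le_of_ne (hg01 ω).1 fun h' => h ((hmem ω).2 h'.symm)
      rw [Set.indicator_of_notMem h]
      refine tendsto_const_nhds.congr' ?_
      obtain ⟨N, hN⟩ := exists_nat_gt (1 / g ω)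
      filter_upwards [eventually_ge_atTop N] with n hn
      have : (N : ℝ) ≤ n := by exact_mod_cast hn
      rw [div_lt_iff₀ hpos] at hN
      rw [max_eq_left]
      nlinarith
  obtain ⟨n, hn⟩ := (hlim.eventually (gt_mem_nhds (lt_add_of_pos_right _ hε))).exists
  refine ⟨BoundedContinuousFunction.ofNormedAddCommGroup _ (hc n) 1 (hb n), fun ω => ?_, hn.le⟩
  by_cases h : ω ∈ F
  · simp [h, (hmem ω).1 h]
  · simp [h]

lemma usc_approx {Ω : Type*} [TopologicalSpace Ω] [PerfectlyNormalSpace Ω]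
    [MeasurableSpace Ω] [BorelSpace Ω] (Q : Measure Ω) [IsProbabilityMeasure Q]
    (η : Ω → ℝ) (hη : UpperSemicontinuous η) (M : ℝ) (hM : ∀ ω, |η ω| ≤ M)
    (r : ℝ) (hr : ∫ ω, η ω ∂Q < r) :
    ∃ ξ : BoundedContinuousFunction Ω ℝ, (∀ ω, η ω ≤ ξ ω) ∧ ∫ ω, ξ ω ∂Q ≤ r := by
  have hint : Integrable η Q :=
    Integrable.of_bound hη.measurable.aestronglyMeasurable M (ae_of_all _ hM)
  obtain ⟨δ, hδ, hδr⟩ : ∃ δ : ℝ, 0 < δ ∧ ∫ ω, η ω ∂Q + δ + δ = r :=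
    ⟨(r - ∫ ω, η ω ∂Q) / 2, by linarith, by ring⟩
  obtain ⟨K, hK⟩ := exists_nat_gt (2 * M / δ)
  let F : ℕ → Set Ω := fun k => η ⁻¹' Set.Ici (-M + δ * (k + 1))
  have hF : ∀ k, IsClosed (F k) := fun k => hη.isClosed_preimage _
  have hpos : (0 : ℝ) < 1 / (K + 1) := by positivity
  choose f hf1 hf2 using fun k => closed_approx Q (F k) (hF k) _ hpos
  have key : ∀ ω, ∑ k ∈ Finset.range K, (F k).indicator (fun _ => (1 : ℝ)) ω
      = (⌊(η ω + M) / δ⌋₊ : ℝ) := by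
    intro ω
    have h0 : 0 ≤ (η ω + M) / δ := div_nonneg (by linarith [(abs_le.1 (hM ω)).1]) hδ.le
    have hle : ⌊(η ω + M) / δ⌋₊ ≤ K := by
      apply Nat.floor_le_of_le
      refine le_trans ?_ hK.le
      gcongr
      linarith [(abs_le.1 (hM ω)).2]
    have hm : ∀ k, ω ∈ F k ↔ k < ⌊(η ω + M) / δ⌋₊ := fun k => by
      rw [← Nat.succ_le_iff, Nat.le_floor_iff h0, le_div_iff₀ hδ]
      simp only [F, Set.mem_preimage, Set.mem_Ici]
      push_cast
      constructor <;> intro h <;> linarith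
    have hi : ∀ k, (F k).indicator (fun _ => (1 : ℝ)) ω
        = if k < ⌊(η ω + M) / δ⌋₊ then 1 else 0 := fun k => by
      by_cases h : ω ∈ F k
      · rw [Set.indicator_of_mem h, if_pos ((hm k).1 h)]
      · rw [Set.indicator_of_notMem h, if_neg (fun h' => h ((hm k).2 h'))]
    rw [Finset.sum_congr rfl fun k _ => hi k]
    rw [← Finset.sum_filter, Finset.sum_const, nsmul_eq_mul, mul_one]
    congr 1
    have : (Finset.range K).filter (fun k => k < ⌊(η ω + M) / δ⌋₊)
        = Finset.range ⌊(η ω + M) / δ⌋₊ := by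
      ext k; simp only [Finset.mem_filter, Finset.mem_range]; omega
    rw [this, Finset.card_range]
  have hindi : ∀ k, Integrable (fun ω => (F k).indicator (fun _ => (1 : ℝ)) ω) Q := fun k =>
    (integrable_const (1 : ℝ)).indicator (hF k).measurableSet
  have hfi : ∀ k, Integrable (fun ω => f k ω) Q := fun k => (f k).integrable Q
  refine ⟨BoundedContinuousFunction.const Ω (-M + δ) + δ • ∑ k ∈ Finset.range K, f k,
    fun ω => ?_, ?_⟩
  · have h1 := Nat.lt_floor_add_one ((η ω + M) / δ)
    rw [← key ω, div_lt_iff₀ hδ] at h1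
    have h2 : ∑ k ∈ Finset.range K, (F k).indicator (fun _ => (1 : ℝ)) ω
      ≤ ∑ k ∈ Finset.range K, f k ω := Finset.sum_le_sum fun k _ => hf1 k ω
    simp only [BoundedContinuousFunction.coe_add, Pi.add_apply,
      BoundedContinuousFunction.const_apply, BoundedContinuousFunction.coe_smul,
      BoundedContinuousFunction.coe_sum, Finset.sum_apply, smul_eq_mul]
    nlinarith
  · simp only [BoundedContinuousFunction.coe_add, Pi.add_apply,
      BoundedContinuousFunction.const_apply, BoundedContinuousFunction.coe_smul,
      BoundedContinuousFunction.coe_sum, Finset.sum_apply, smul_eq_mul]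
    rw [integral_add (integrable_const _) ((integrable_finsetSum _ fun k _ => hfi k).const_mul _),
      integral_const, integral_const_mul, integral_finsetSum _ fun k _ => hfi k]
    have h2 : ∑ k ∈ Finset.range K, ∫ ω, f k ω ∂Q
        ≤ ∑ k ∈ Finset.range K, ∫ ω, (F k).indicator (fun _ => (1 : ℝ)) ω ∂Q + 1 := by
      refine (Finset.sum_le_sum fun k _ => hf2 k).trans ?_
      rw [Finset.sum_add_distrib]
      gcongr
      rw [Finset.sum_const, Finset.card_range, nsmul_eq_mul, mul_one_div, div_le_one (by positivity)]
      linarith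
    have h3 : δ * ∑ k ∈ Finset.range K, ∫ ω, (F k).indicator (fun _ => (1 : ℝ)) ω ∂Q
        ≤ ∫ ω, η ω ∂Q + M := by
      rw [← integral_finsetSum _ fun k _ => hindi k, ← integral_const_mul]
      have : ∫ ω, η ω ∂Q + M = ∫ ω, (η ω + M) ∂Q := by
        rw [integral_add hint (integrable_const _)]; simp
      rw [this]
      refine integral_mono ((integrable_finsetSum _ fun k _ => hindi k).const_mul _)
        (hint.add (integrable_const _)) fun ω => ?_
      have h0 : 0 ≤ (η ω + M) / δ := div_nonneg (by linarith [(abs_le.1 (hM ω)).1]) hδ.le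
      have := Nat.floor_le h0
      rw [le_div_iff₀ hδ] at this
      simp only [key ω]
      linarith
    simp only [probReal_univ, one_smul]
    nlinarith


theorem statement11 {Ω : Type*} [TopologicalSpace Ω] [T2Space Ω] [PerfectlyNormalSpace Ω]
    [MeasurableSpace Ω] [BorelSpace Ω]
    (𝒬 : Set (ProbabilityMeasure Ω)) (h𝒬ne : 𝒬.Nonempty)
    (h𝒬conv : ∀ Q₁ ∈ 𝒬, ∀ Q₂ ∈ 𝒬, ∀ r : ENNReal, r ≤ 1 →
      ∃ Q ∈ 𝒬, (Q : Measure Ω) = r • (Q₁ : Measure Ω) + (1 - r) • (Q₂ : Measure Ω))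
    (h𝒬comp : IsCompact 𝒬)
    (η : Ω → ℝ) (hη : UpperSemicontinuous η) (M : ℝ) (hM : ∀ ω, |η ω| ≤ M) :
    (⨆ Q ∈ 𝒬, ((∫ ω, η ω ∂(Q : Measure Ω) : ℝ) : EReal)) =
      ⨅ ξ ∈ {ξ : BoundedContinuousFunction Ω ℝ | ∀ ω, η ω ≤ ξ ω},
        ⨆ Q ∈ 𝒬, ((∫ ω, ξ ω ∂(Q : Measure Ω) : ℝ) : EReal) := by

  have hint : ∀ Q : ProbabilityMeasure Ω, Integrable η (Q : Measure Ω) := fun Q =>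
    Integrable.of_bound hη.measurable.aestronglyMeasurable M (ae_of_all _ hM)
  apply le_antisymm
  · refine le_iInf₂ fun ξ hξ => iSup₂_mono fun Q _ => ?_
    exact EReal.coe_le_coe_iff.2 (integral_mono (hint Q) (ξ.integrable _) hξ)
  · refine le_of_forall_gt_imp_ge_of_dense fun c hc => ?_
    let ι := {ξ : BoundedContinuousFunction Ω ℝ // ∀ ω, η ω ≤ ξ ω}
    let U : ι → Set (ProbabilityMeasure Ω) := fun ξ =>
      {Q | ((∫ ω, ξ.1 ω ∂(Q : Measure Ω) : ℝ) : EReal) < c}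
    have : Nonempty ι :=
      ⟨⟨BoundedContinuousFunction.const Ω M, fun ω => (le_abs_self _).trans (hM ω)⟩⟩
    obtain ⟨ξ, hξ⟩ := h𝒬comp.elim_directed_cover U
      (fun ξ => isOpen_lt (continuous_coe_real_ereal.comp
        (ProbabilityMeasure.continuous_integral_boundedContinuousFunction ξ.1)) continuous_const)
      (fun Q hQ => by
        have h1 : ((∫ ω, η ω ∂(Q : Measure Ω) : ℝ) : EReal) < c :=
          lt_of_le_of_lt (le_iSup₂ (f := fun (Q : ProbabilityMeasure Ω) (_ : Q ∈ 𝒬) =>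
            ((∫ ω, η ω ∂(Q : Measure Ω) : ℝ) : EReal)) Q hQ) hc
        obtain ⟨r, hr1, hr2⟩ := EReal.lt_iff_exists_real_btwn.1 h1
        obtain ⟨ξ, hξ1, hξ2⟩ := usc_approx (Q : Measure Ω) η hη M hM r
          (EReal.coe_lt_coe_iff.1 hr1)
        exact Set.mem_iUnion.2 ⟨⟨ξ, hξ1⟩, lt_of_le_of_lt (EReal.coe_le_coe_iff.2 hξ2) hr2⟩)
      (fun ξ₁ ξ₂ => ⟨⟨ξ₁.1 ⊓ ξ₂.1, fun ω => le_inf (ξ₁.2 ω) (ξ₂.2 ω)⟩,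
        fun Q (hQ : _ < c) => lt_of_le_of_lt (EReal.coe_le_coe_iff.2
          (integral_mono ((ξ₁.1 ⊓ ξ₂.1).integrable _) (ξ₁.1.integrable _)
            fun ω => inf_le_left)) hQ,
        fun Q (hQ : _ < c) => lt_of_le_of_lt (EReal.coe_le_coe_iff.2
          (integral_mono ((ξ₁.1 ⊓ ξ₂.1).integrable _) (ξ₂.1.integrable _)
            fun ω => inf_le_right)) hQ⟩)
    exact (iInf₂_le ξ.1 ξ.2).trans (iSup₂_le fun Q hQ => (hξ hQ).le)
end

section
/- Let Ω be a perfectly normal Hausdorff topological space equipped with its Borel σ-algebra, and let 𝒬 be a nonempty set of Borel probability measures on Ω that is sequentially compact in the topology of weak convergence (every sequence in 𝒬 has a subsequence converging weakly to an element of 𝒬). Let (η_n) be a sequence of bounded upper semicontinuous functions Ω → ℝ decreasing pointwise to a bounded function η* : Ω → ℝ. Then lim_{n → ∞} sup_{Q ∈ 𝒬} ∫ η_n dQ = sup_{Q ∈ 𝒬} ∫ η* dQ. -/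
open MeasureTheory Filter Topology

theorem aux_outer {Ω : Type*} [TopologicalSpace Ω] [PerfectlyNormalSpace Ω] :
    HasOuterApproxClosed Ω := by
  refine ⟨fun F hF => ?_⟩
  obtain ⟨f, hf, hf01⟩ :=
    perfectlyNormalSpace_iff_forall_isClosed_preimage_zero.1 inferInstance F hF
  have hle : ∀ (n : ℕ) x, (1 - n * f x).toNNReal ≤ 1 := by
    intro n x
    rw [Real.toNNReal_le_one]
    have := mul_nonneg (Nat.cast_nonneg (α := ℝ) n) (hf01 x).1
    linarith
  refine ⟨fun n => BoundedContinuousFunction.mkOfBound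
    ⟨fun x => (1 - n * f x).toNNReal, by fun_prop⟩ 1 ?_, ?_, ?_, ?_⟩
  · intro x y
    have h1 := hle n x
    have h2 := hle n y
    rw [← NNReal.coe_le_coe] at h1 h2
    rw [NNReal.dist_eq]
    have h3 := ((1 - n * f x).toNNReal).coe_nonneg
    have h4 := ((1 - n * f y).toNNReal).coe_nonneg
    simp only [NNReal.coe_one] at h1 h2
    simp only [ContinuousMap.coe_mk]
    rw [abs_le]
    constructor <;> linarith
  · exact fun n x => hle n x
  · intro n x hx
    rw [hf] at hx
    have hx0 : f x = 0 := hx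
    simp [hx0]
  · rw [tendsto_pi_nhds]
    intro x
    by_cases hx : x ∈ F
    · have hx0 : f x = 0 := by rw [hf] at hx; exact hx
      simp [hx, hx0]
    · have hx0 : f x ≠ 0 := by rw [hf] at hx; exact hx
      have hpos : 0 < f x := lt_of_le_of_ne (hf01 x).1 hx0.symm
      simp only [hx, not_false_eq_true, Set.indicator_of_notMem]
      obtain ⟨N, hN⟩ := exists_nat_gt (1 / f x)
      refine tendsto_const_nhds.congr' ?_
      filter_upwards [eventually_ge_atTop N] with n hn
      have h1 : (N : ℝ) ≤ n := by exact_mod_cast hn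
      have h2 : 1 < n * f x := by
        rw [div_lt_iff₀ hpos] at hN
        nlinarith
      symm
      change (1 - n * f x).toNNReal = 0
      rw [Real.toNNReal_eq_zero]
      linarith

theorem aux_usc {Ω : Type*} [TopologicalSpace Ω] [PerfectlyNormalSpace Ω]
    [MeasurableSpace Ω] [BorelSpace Ω] (Q : ℕ → Measure Ω) (P : Measure Ω)
    [∀ n, IsProbabilityMeasure (Q n)] [IsProbabilityMeasure P]
    (hw : ∀ ξ : BoundedContinuousFunction Ω ℝ,
          Tendsto (fun n => ∫ ω, ξ ω ∂(Q n)) atTop (𝓝 (∫ ω, ξ ω ∂P)))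
    (f : Ω → ℝ) (hf : UpperSemicontinuous f) (M : ℝ) (hb : ∀ ω, |f ω| ≤ M) (c : ℝ)
    (hc : ∀ᶠ n in atTop, c ≤ ∫ ω, f ω ∂(Q n)) : c ≤ ∫ ω, f ω ∂P := by
  haveI : HasOuterApproxClosed Ω := aux_outer
  let Q' : ℕ → ProbabilityMeasure Ω := fun n => ⟨Q n, inferInstance⟩
  let P' : ProbabilityMeasure Ω := ⟨P, inferInstance⟩
  have hlim : Tendsto Q' atTop (𝓝 P') :=
    ProbabilityMeasure.tendsto_iff_forall_integral_tendsto.2 hw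
  have hopen : ∀ G, IsOpen G → P G ≤ atTop.liminf (fun i ↦ Q i G) := fun G hG =>
    ProbabilityMeasure.le_liminf_measure_open_of_tendsto hlim hG
  have hfm : Measurable f := hf.measurable
  have hint : ∀ (μ : Measure Ω) [IsProbabilityMeasure μ], Integrable f μ := fun μ _ =>
    Integrable.of_bound hfm.aestronglyMeasurable M (Eventually.of_forall hb)
  have hgm : Measurable (fun ω => M - f ω) := measurable_const.sub hfm
  have hnn : ∀ ω, 0 ≤ M - f ω := fun ω => by linarith [(abs_le.1 (hb ω)).2]
  have key : ∫⁻ x, ENNReal.ofReal (M - f x) ∂P ≤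
      atTop.liminf (fun i ↦ ∫⁻ x, ENNReal.ofReal (M - f x) ∂(Q i)) := by
    simp_rw [fun μ : Measure Ω =>
      lintegral_eq_lintegral_meas_lt μ (Eventually.of_forall hnn) hgm.aemeasurable]
    refine le_trans (lintegral_mono (fun t => hopen _ ?_)) (lintegral_liminf_le (fun n ↦
      Antitone.measurable (fun s t hst ↦ measure_mono (fun ω hω ↦ lt_of_le_of_lt hst hω))))
    have : {a | t < M - f a} = f ⁻¹' Set.Iio (M - t) := by
      ext a
      simp only [Set.mem_setOf_eq, Set.mem_preimage, Set.mem_Iio]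
      constructor <;> intro h <;> linarith
    rw [this]
    exact hf.isOpen_preimage _
  have heq : ∀ (μ : Measure Ω) [IsProbabilityMeasure μ],
      ∫⁻ x, ENNReal.ofReal (M - f x) ∂μ = ENNReal.ofReal (M - ∫ x, f x ∂μ) := by
    intro μ _
    have hi : Integrable (fun x => M - f x) μ := (integrable_const M).sub (hint μ)
    rw [← ofReal_integral_eq_lintegral_ofReal hi
      (Eventually.of_forall hnn), integral_sub (integrable_const M) (hint μ)]
    simp
  simp_rw [heq] at key
  have h2 : atTop.liminf (fun i ↦ ENNReal.ofReal (M - ∫ x, f x ∂(Q i))) ≤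
      ENNReal.ofReal (M - c) := by
    refine (liminf_le_liminf (v := fun _ => ENNReal.ofReal (M - c)) ?_).trans (by simp)
    filter_upwards [hc] with n hn
    exact ENNReal.ofReal_le_ofReal (by linarith)
  have hcM : c ≤ M := by
    obtain ⟨n, hn⟩ := hc.exists
    have : ∫ ω, f ω ∂(Q n) ≤ ∫ ω, M ∂(Q n) :=
      integral_mono (hint _) (integrable_const M) (fun ω => (abs_le.1 (hb ω)).2)
    simp at this
    linarith
  have := (ENNReal.ofReal_le_ofReal_iff (by linarith)).1 (key.trans h2)
  linarith



theorem statement13 {Ω : Type*} [TopologicalSpace Ω] [T2Space Ω] [PerfectlyNormalSpace Ω]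
    [MeasurableSpace Ω] [BorelSpace Ω]
    (𝒬 : Set (Measure Ω)) (h𝒬ne : 𝒬.Nonempty)
    (h𝒬prob : ∀ Q ∈ 𝒬, IsProbabilityMeasure Q)
    (h𝒬seq : ∀ Q : ℕ → Measure Ω, (∀ n, Q n ∈ 𝒬) →
      ∃ Qstar ∈ 𝒬, ∃ φ : ℕ → ℕ, StrictMono φ ∧
        ∀ ξ : BoundedContinuousFunction Ω ℝ,
          Tendsto (fun n => ∫ ω, ξ ω ∂(Q (φ n))) atTop (𝓝 (∫ ω, ξ ω ∂Qstar)))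
    (η : ℕ → Ω → ℝ) (hη : ∀ n, UpperSemicontinuous (η n))
    (M : ℝ) (hb : ∀ n ω, |η n ω| ≤ M)
    (ηstar : Ω → ℝ) (hmono : ∀ ω, Antitone fun n => η n ω)
    (hlim : ∀ ω, Tendsto (fun n => η n ω) atTop (𝓝 (ηstar ω)))
    (hbstar : ∀ ω, |ηstar ω| ≤ M) :
    Tendsto (fun n => ⨆ Q ∈ 𝒬, ((∫ ω, η n ω ∂Q : ℝ) : EReal)) atTop
      (𝓝 (⨆ Q ∈ 𝒬, ((∫ ω, ηstar ω ∂Q : ℝ) : EReal))) := by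


  have hmeas : ∀ n, Measurable (η n) := fun n => (hη n).measurable
  have hmeasS : Measurable ηstar :=
    measurable_of_tendsto_metrizable hmeas (tendsto_pi_nhds.2 hlim)
  have hint : ∀ n, ∀ Q ∈ 𝒬, Integrable (η n) Q := fun n Q hQ =>
    haveI := h𝒬prob Q hQ
    Integrable.of_bound (hmeas n).aestronglyMeasurable M (Eventually.of_forall (hb n))
  have hintS : ∀ Q ∈ 𝒬, Integrable ηstar Q := fun Q hQ =>
    haveI := h𝒬prob Q hQ
    Integrable.of_bound hmeasS.aestronglyMeasurable M (Eventually.of_forall hbstar)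
  have hanti : Antitone (fun n => ⨆ Q ∈ 𝒬, ((∫ ω, η n ω ∂Q : ℝ) : EReal)) := by
    intro m n hmn
    refine iSup₂_mono fun Q hQ => ?_
    exact EReal.coe_le_coe_iff.2
      (integral_mono (hint n Q hQ) (hint m Q hQ) (fun ω => hmono ω hmn))
  have hT := tendsto_atTop_iInf hanti
  convert hT using 2
  apply le_antisymm
  · refine le_iInf fun n => iSup₂_mono fun Q hQ => ?_
    exact EReal.coe_le_coe_iff.2
      (integral_mono (hintS Q hQ) (hint n Q hQ) (fun ω => (hmono ω).le_of_tendsto (hlim ω) n))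
  · by_contra hcon
    rw [not_le] at hcon
    obtain ⟨c, hc1, hc2⟩ := EReal.lt_iff_exists_real_btwn.1 hcon
    have hex : ∀ n, ∃ Q ∈ 𝒬, c < ∫ ω, η n ω ∂Q := by
      intro n
      have := hc2.trans_le (iInf_le _ n)
      simp only [lt_iSup_iff] at this
      obtain ⟨Q, hQ, h⟩ := this
      exact ⟨Q, hQ, EReal.coe_lt_coe_iff.1 h⟩
    choose Q hQ hcQ using hex
    obtain ⟨P, hP, φ, hφ, hw⟩ := h𝒬seq Q hQ
    haveI := h𝒬prob P hP
    haveI : ∀ n, IsProbabilityMeasure (Q (φ n)) := fun n => h𝒬prob _ (hQ _)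
    have hm : ∀ m, c ≤ ∫ ω, η m ω ∂P := by
      intro m
      refine aux_usc (fun n => Q (φ n)) P hw (η m) (hη m) M (hb m) c ?_
      filter_upwards [eventually_ge_atTop m] with n hn
      refine (hcQ (φ n)).le.trans ?_
      exact integral_mono (hint _ _ (hQ _)) (hint _ _ (hQ _))
        (fun ω => hmono ω (hn.trans (hφ.le_apply)))
    have hdct : Tendsto (fun n => ∫ ω, η n ω ∂P) atTop (𝓝 (∫ ω, ηstar ω ∂P)) :=
      tendsto_integral_of_dominated_convergence (fun _ => M)
        (fun n => (hmeas n).aestronglyMeasurable) (integrable_const M)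
        (fun n => Eventually.of_forall (hb n)) (Eventually.of_forall hlim)
    have h1 : c ≤ ∫ ω, ηstar ω ∂P := ge_of_tendsto' hdct hm
    have h2 : ((∫ ω, ηstar ω ∂P : ℝ) : EReal) ≤ ⨆ Q ∈ 𝒬, ((∫ ω, ηstar ω ∂Q : ℝ) : EReal) :=
      le_iSup₂_of_le P hP le_rfl
    exact absurd ((EReal.coe_le_coe_iff.2 h1).trans h2) (not_le.2 hc1)
end

section
/- Let Ω be a nonempty set and let Î be a collection of functions Ω → [−∞, +∞] with the following Fatou-closure property: whenever (ℓ_n) is a sequence in Î for which there exists a bounded function λ : Ω → ℝ with ℓ_n(ω) ≥ −λ(ω) for all n and all ω, then the pointwise liminf_n ℓ_n belongs to Î. Assume 0 ∈ Î. Let (ζ_n) be a sequence of bounded real-valued functions on Ω increasing pointwise to a bounded function ζ* : Ω → ℝ. Then lim_{n → ∞} Φ(ζ_n; Î) = Φ(ζ*; Î), where the limit is taken in [−∞, ∞]. -/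
open Filter Topology

/-- The super-replication functional
`Φ(ξ; I) := inf {c ∈ ℝ : ξ ≤ c + ℓ pointwise for some ℓ ∈ I}`, as an extended real
(with `inf ∅ = +∞`). -/
noncomputable def Phi {Ω : Type*} (I : Set (Ω → EReal)) (ξ : Ω → EReal) : EReal :=
  sInf {x : EReal | ∃ c : ℝ, x = (c : EReal) ∧ ∃ ℓ ∈ I, ∀ ω, ξ ω ≤ (c : EReal) + ℓ ω}

theorem aux_le (a d : ℝ) (x : EReal) : (a : EReal) ≤ (d : EReal) + x ↔ ((a - d : ℝ) : EReal) ≤ x := by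
  induction x with
  | bot => simp [-EReal.coe_sub]
  | top => simp
  | coe x =>
    norm_cast
    constructor <;> intro h <;> linarith

theorem statement14 {Ω : Type*} [Nonempty Ω] (Ihat : Set (Ω → EReal))
    (hzero : (fun _ => (0 : EReal)) ∈ Ihat)
    (hfatou : ∀ ℓ : ℕ → Ω → EReal, (∀ n, ℓ n ∈ Ihat) →
      (∃ (lam : Ω → ℝ) (M : ℝ), (∀ ω, |lam ω| ≤ M) ∧ ∀ (n : ℕ) ω, -(lam ω : EReal) ≤ ℓ n ω) →
      (fun ω => liminf (fun n => ℓ n ω) atTop) ∈ Ihat)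
    (ζ : ℕ → Ω → ℝ) (hbnd : ∀ n, ∃ M : ℝ, ∀ ω, |ζ n ω| ≤ M)
    (hmono : ∀ ω, Monotone fun n => ζ n ω)
    (ζstar : Ω → ℝ) (hζb : ∃ M : ℝ, ∀ ω, |ζstar ω| ≤ M)
    (hlim : ∀ ω, Tendsto (fun n => ζ n ω) atTop (𝓝 (ζstar ω))) :
    Tendsto (fun n => Phi Ihat fun ω => (ζ n ω : EReal)) atTop
      (𝓝 (Phi Ihat fun ω => (ζstar ω : EReal))) := by
  have hle : ∀ (n : ℕ) ω, ζ n ω ≤ ζstar ω := fun n ω => (hmono ω).ge_of_tendsto (hlim ω) n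
  have hPm : ∀ f g : Ω → ℝ, (∀ ω, f ω ≤ g ω) →
      Phi Ihat (fun ω => (f ω : EReal)) ≤ Phi Ihat (fun ω => (g ω : EReal)) := by
    intro f g hfg
    apply sInf_le_sInf
    rintro x ⟨c, hx, l, hl, h⟩
    exact ⟨c, hx, l, hl, fun ω => (EReal.coe_le_coe_iff.2 (hfg ω)).trans (h ω)⟩
  have hmonoP : Monotone (fun n => Phi Ihat fun ω => (ζ n ω : EReal)) :=
    fun m n hmn => hPm _ _ fun ω => hmono ω hmn
  have ht := tendsto_atTop_iSup hmonoP
  suffices hs : (⨆ n, Phi Ihat fun ω => (ζ n ω : EReal)) = Phi Ihat fun ω => (ζstar ω : EReal) by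
    rwa [hs] at ht
  apply le_antisymm (iSup_le fun n => hPm _ _ (hle n))
  apply EReal.le_of_forall_lt_iff_le.1
  intro d hd
  have hex : ∀ n, ∃ l ∈ Ihat, ∀ ω, ((ζ n ω - d : ℝ) : EReal) ≤ l ω := by
    intro n
    have h1 : (Phi Ihat fun ω => (ζ n ω : EReal)) < d :=
      (le_iSup (fun n => Phi Ihat fun ω => (ζ n ω : EReal)) n).trans_lt hd
    obtain ⟨x, ⟨c, rfl, l, hl, h⟩, hx⟩ := sInf_lt_iff.1 h1
    refine ⟨l, hl, fun ω => (aux_le _ _ _).1 ((h ω).trans ?_)⟩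
    gcongr
  choose l hl h using hex
  obtain ⟨M, hM⟩ := hbnd 0
  have hI := hfatou l hl ⟨fun ω => -(ζ 0 ω - d), M + |d|, fun ω => by
    rw [abs_neg]
    exact (abs_sub _ _).trans (by linarith [hM ω]), fun n ω => by
    rw [← EReal.coe_neg, neg_neg]
    refine le_trans ?_ (h n ω)
    have := hmono ω (Nat.zero_le n)
    exact EReal.coe_le_coe_iff.2 (by simpa using this)⟩
  refine sInf_le ⟨d, rfl, _, hI, fun ω => (aux_le _ _ _).2 ?_⟩
  have h2 : Tendsto (fun n => ((ζ n ω - d : ℝ) : EReal)) atTop (𝓝 ((ζstar ω - d : ℝ) : EReal)) :=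
    EReal.tendsto_coe.2 ((hlim ω).sub_const d)
  rw [← h2.liminf_eq]
  exact liminf_le_liminf (Eventually.of_forall fun n => h n ω)
end
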